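/- arXiv:1109.1079 — 3 statements merged into one kernel-verified Lean document; each statement's English description precedes it below -/
import Mathlib

section
/- Let n, r be positive integers with r ≤ n and let F be an intersecting family of r-element subsets of [n]. Define F₂ = {F ∈ F : for every x ∈ F there exists F′ ∈ F with (F \ {x}) ∩ F′ = ∅}. Then |F₂| ≤ r^r. -/
/-!
Members of `F₂` are exactly the members of `F` that are minimal among the sets meeting every member
of `F`. To count minimal transversals of size at most `k`, grow a partial set `S` contained in them:
as long as `S` is a proper subset of one of them, the minimality of the latter yields `B ∈ F`
disjoint from `S`. Every transversal containing `S` meets `B`, so it contains one of the at most `r`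
sets `S ∪ {y}`, `y ∈ B`. After at most `k` such steps there is nothing left to choose, whence at
most `r ^ k` transversals.
-/

/-- The degree of `x` in the family `F`: the number of members of `F` containing `x`. -/
def degree (F : Finset (Finset ℕ)) (x : ℕ) : ℕ := (F.filter (fun A => x ∈ A)).card

/-- `F` is an intersecting family: any two members have nonempty intersection. -/
def IsIntersecting (F : Finset (Finset ℕ)) : Prop :=
  ∀ A ∈ F, ∀ B ∈ F, (A ∩ B).Nonempty

/-- `F` is a family of `r`-element subsets of `[n] = {1,…,n}`. -/
def IsFamily (n r : ℕ) (F : Finset (Finset ℕ)) : Prop :=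
  ∀ A ∈ F, A ⊆ Finset.Icc 1 n ∧ A.card = r

/-- `F` is a maximal intersecting family of `r`-subsets of `[n]`: it is intersecting and
every `r`-subset of `[n]` not in `F` is disjoint from some member of `F`. -/
def IsMaxIntersecting (n r : ℕ) (F : Finset (Finset ℕ)) : Prop :=
  IsIntersecting F ∧
    ∀ G : Finset ℕ, G ⊆ Finset.Icc 1 n → G.card = r → G ∉ F → ∃ A ∈ F, A ∩ G = ∅

/-- `∪F = [n]`: every element of `[n]` lies in some member of `F`. -/
def Covers (n : ℕ) (F : Finset (Finset ℕ)) : Prop :=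
  ∀ x ∈ Finset.Icc 1 n, ∃ A ∈ F, x ∈ A

/-- `Δ(F)`: the maximum degree over `x ∈ [n]`. -/
noncomputable def maxDeg (n : ℕ) (F : Finset (Finset ℕ)) : ℕ :=
  sSup (degree F '' Set.Icc 1 n)

/-- `δ(F)`: the minimum degree over `x ∈ [n]`. -/
noncomputable def minDeg (n : ℕ) (F : Finset (Finset ℕ)) : ℕ :=
  sInf (degree F '' Set.Icc 1 n)

section Transversals

open Finset

variable {α : Type*} {F : Set (Finset α)} {G : Finset (Finset α)} {S T B : Finset α} {r k m : ℕ}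

/-- `T` is a transversal (hitting set) of the family `F`: it meets every member of `F`.
The members of `F₂` are minimal transversals, expressed by `Minimal (IsTransversal F) T`. -/
def IsTransversal (F : Set (Finset α)) (T : Finset α) : Prop :=
  ∀ ⦃B⦄, B ∈ F → ¬Disjoint T B

theorem IsTransversal.mono (hS : IsTransversal F S) (hST : S ⊆ T) : IsTransversal F T :=
  fun _ hB hTB => hS hB (hTB.mono_left hST)

theorem exists_disjoint_of_ssubset_of_minimal_isTransversal
    (hT : Minimal (IsTransversal F) T) (hST : S ⊂ T) : ∃ B ∈ F, Disjoint S B := by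
  simpa [IsTransversal] using hT.not_prop_of_lt hST

theorem minimal_isTransversal_iff [DecidableEq α] :
    Minimal (IsTransversal F) T ↔
      IsTransversal F T ∧ ∀ x ∈ T, ∃ B ∈ F, Disjoint (T.erase x) B := by
  rw [minimal_iff_forall_erase fun _ _ => IsTransversal.mono]
  simp [IsTransversal]

theorem card_le_card_mul_of_forall_not_disjoint [DecidableEq α]
    (hG : ∀ A ∈ G, ¬Disjoint A B) (hm : ∀ y ∈ B, #{A ∈ G | y ∈ A} ≤ m) : #G ≤ #B * m := by
  have hcover : G ⊆ B.biUnion fun y => {A ∈ G | y ∈ A} := fun A hA => by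
    obtain ⟨y, hyA, hyB⟩ := not_disjoint_iff.mp (hG A hA)
    exact mem_biUnion.mpr ⟨y, hyB, mem_filter.mpr ⟨hA, hyA⟩⟩
  exact (card_le_card hcover).trans (card_biUnion_le_card_mul _ _ _ hm)

theorem card_le_pow_of_minimal_isTransversal_of_subset (hr : 0 < r) (hF : ∀ B ∈ F, #B ≤ r)
    (hG : ∀ A ∈ G, Minimal (IsTransversal F) A) (hSG : ∀ A ∈ G, S ⊆ A)
    (hk : ∀ A ∈ G, #A ≤ #S + k) : #G ≤ r ^ k := by
  classical
  induction k generalizing S G with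
  | zero =>
    have hGS : G ⊆ {S} := fun A hA =>
      mem_singleton.mpr (eq_of_subset_of_card_le (hSG A hA) (hk A hA)).symm
    simpa using card_le_card hGS
  | succ k ih =>
    by_cases hGS : G ⊆ {S}
    · calc
        #G ≤ 1 := by simpa using card_le_card hGS
        _ ≤ r ^ (k + 1) := Nat.one_le_pow _ _ hr
    obtain ⟨A, hA, hAS⟩ := not_subset.mp hGS
    have hSA : S ⊂ A := (hSG A hA).ssubset_of_ne fun h => hAS (mem_singleton.mpr h.symm)
    obtain ⟨B, hB, hSB⟩ := exists_disjoint_of_ssubset_of_minimal_isTransversal (hG A hA) hSA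
    have hbranch : ∀ y ∈ B, #{C ∈ G | y ∈ C} ≤ r ^ k := fun y hy => by
      have hyS : y ∉ S := disjoint_right.mp hSB hy
      refine ih (S := insert y S) (fun C hC => hG C (mem_filter.mp hC).1) (fun C hC => ?_)
        fun C hC => ?_
      · obtain ⟨hCG, hyC⟩ := mem_filter.mp hC
        exact insert_subset hyC (hSG C hCG)
      · have hCk : #C ≤ #S + (k + 1) := hk C (mem_filter.mp hC).1
        rw [card_insert_of_notMem hyS]
        lia
    calc
      #G ≤ #B * r ^ k :=
        card_le_card_mul_of_forall_not_disjoint (fun C hC => (hG C hC).prop hB) hbranch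
      _ ≤ r * r ^ k := Nat.mul_le_mul_right _ (hF B hB)
      _ = r ^ (k + 1) := (pow_succ' r k).symm

theorem card_le_pow_of_minimal_isTransversal (hr : 0 < r) (hF : ∀ B ∈ F, #B ≤ r)
    (hG : ∀ A ∈ G, Minimal (IsTransversal F) A) (hk : ∀ A ∈ G, #A ≤ k) : #G ≤ r ^ k :=
  card_le_pow_of_minimal_isTransversal_of_subset (S := ∅) hr hF hG (fun A _ => A.empty_subset)
    (by simpa using hk)

theorem card_F2_le_pow_general [DecidableEq α] (F : Finset (Finset α))
    (hF : ∀ A ∈ F, #A ≤ r) (hint : (F : Set (Finset α)).Intersecting) :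
    #{A ∈ F | ∀ x ∈ A, ∃ B ∈ F, (A \ {x}) ∩ B = ∅} ≤ r ^ r := by
  obtain rfl | ⟨A₀, hA₀⟩ := F.eq_empty_or_nonempty
  · simp
  have hA₀_nonempty : A₀.Nonempty := nonempty_iff_ne_empty.mpr (hint.ne_bot hA₀)
  have hr : 0 < r := hA₀_nonempty.card_pos.trans_le (hF A₀ hA₀)
  refine card_le_pow_of_minimal_isTransversal (F := F) hr hF (fun A hA => ?_)
    fun A hA => hF A (mem_filter.mp hA).1
  obtain ⟨hAF, hAx⟩ := mem_filter.mp hA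
  refine minimal_isTransversal_iff.mpr ⟨fun _ hB => hint hAF hB, ?_⟩
  simpa only [mem_coe, disjoint_iff_inter_eq_empty, sdiff_singleton_eq_erase] using hAx

end Transversals

/-- For an intersecting family `F` of `r`-subsets of `[n]`, the subfamily
`F₂ = {F ∈ F : ∀ x ∈ F, ∃ F' ∈ F, (F \ {x}) ∩ F' = ∅}` has at most `r^r` members. -/
theorem card_F2_le_pow (n r : ℕ) (hr : 1 ≤ r) (hrn : r ≤ n)
    (F : Finset (Finset ℕ)) (hfam : IsFamily n r F) (hint : IsIntersecting F) :
    (F.filter (fun A => ∀ x ∈ A, ∃ B ∈ F, (A \ {x}) ∩ B = ∅)).card ≤ r ^ r := by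
  exact card_F2_le_pow_general F (fun A hA => (hfam A hA).2.le) fun A hA B hB =>
    Finset.not_disjoint_iff_nonempty_inter.mpr (hint A hA B hB)
end

section
/- Let n, r be integers with r ≥ 3 and 2r + 2 < n. Set S = {2, 3, …, 2r−2} and S₀ = {2, 3, …, r−1}, and define F₁ = {{1} ∪ G : G an (r−1)-element subset of S}, F₂ = {{1, i} ∪ H : 2r−1 ≤ i ≤ n, H an (r−2)-element subset of S with H ≠ S₀}, F₃ = the family of all r-element subsets of S, F₄ = {(S \ S₀) ∪ {i} : 2r−1 ≤ i ≤ n}, and F = F₁ ∪ F₂ ∪ F₃ ∪ F₄. Then the degree of the element 1 in F equals binom(2r−3, r−1) + (binom(2r−3, r−2) − 1)(n − 2r + 2), and for every i with 2r−1 ≤ i ≤ n the degree of i in F equals binom(2r−3, r−2). -/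
/-- `S = {2, …, 2r−2}`. -/
def Sset (r : ℕ) : Finset ℕ := Finset.Icc 2 (2 * r - 2)

/-- `S₀ = {2, …, r−1}`. -/
def S0set (r : ℕ) : Finset ℕ := Finset.Icc 2 (r - 1)

/-- `F₁ = {{1} ∪ G : G ∈ binom(S, r−1)}`. -/
def Fam1 (r : ℕ) : Finset (Finset ℕ) :=
  ((Sset r).powersetCard (r - 1)).image (fun G => insert 1 G)

/-- `F₂ = {{1, i} ∪ H : 2r−1 ≤ i ≤ n, H ∈ binom(S, r−2), H ≠ S₀}`. -/
def Fam2 (n r : ℕ) : Finset (Finset ℕ) :=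
  ((Finset.Icc (2 * r - 1) n) ×ˢ
      (((Sset r).powersetCard (r - 2)).filter (fun H => H ≠ S0set r))).image
    (fun p => insert 1 (insert p.1 p.2))

/-- `F₃ = binom(S, r)`. -/
def Fam3 (r : ℕ) : Finset (Finset ℕ) := (Sset r).powersetCard r

/-- `F₄ = {(S \ S₀) ∪ {i} : 2r−1 ≤ i ≤ n}`. -/
def Fam4 (n r : ℕ) : Finset (Finset ℕ) :=
  (Finset.Icc (2 * r - 1) n).image (fun i => insert i (Sset r \ S0set r))

/-- `F = F₁ ∪ F₂ ∪ F₃ ∪ F₄`. -/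
def FamConstr (n r : ℕ) : Finset (Finset ℕ) := Fam1 r ∪ Fam2 n r ∪ Fam3 r ∪ Fam4 n r

/-!
Write `T = {2r−1, …, n}` for the elements of `[n]` outside `{1} ∪ S`, and `𝓗` for the family of
`(r−2)`-subsets of `S` other than `S₀`. For a set `U` and a family `𝒢` of sets disjoint from `U`,
the family `{A ∪ {u} : u ∈ U, A ∈ 𝒢}` has `|U| |𝒢|` members, of which `|𝒢|` contain a given point
of `U`. The family `F` has this form, up to members disjoint from `U`, in two ways:
* for `U = {1}`, with `𝒢` consisting of the `(r−1)`-subsets of `S` and the sets `{i} ∪ H`, where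
  `i ∈ T` and `H ∈ 𝓗`, the other members being those of `F₃ ∪ F₄`;
* for `U = T`, with `𝒢` consisting of `S \ S₀` and the sets `{1} ∪ H`, where `H ∈ 𝓗`, the other
  members being those of `F₁ ∪ F₃`.
Both degrees are therefore sizes of the corresponding `𝒢`.
-/

section

open Finset

section InsertFamily

variable {α : Type*} {S T U : Finset α} {ℱ 𝒢 : Finset (Finset α)}

lemma forall_mem_powersetCard_disjoint (h : Disjoint U S) (k : ℕ) :
    ∀ A ∈ S.powersetCard k, Disjoint U A :=
  fun _ hA => h.mono_right (mem_powersetCard.1 hA).1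

variable [DecidableEq α]

lemma forall_mem_image₂_insert_disjoint (hUT : Disjoint U T) (h𝒢 : ∀ A ∈ 𝒢, Disjoint U A) :
    ∀ A ∈ image₂ insert T 𝒢, Disjoint U A :=
  forall_mem_image₂.2 fun _ hi A hA =>
    disjoint_insert_right.2 ⟨disjoint_right.1 hUT hi, h𝒢 A hA⟩

lemma disjoint_image₂_insert (hℱ : ∀ A ∈ ℱ, Disjoint T A) : Disjoint ℱ (image₂ insert T 𝒢) := by
  refine disjoint_right.2 (forall_mem_image₂.2 fun i hi A _ hiA => ?_)
  exact disjoint_left.1 (hℱ _ hiA) hi (mem_insert_self i A)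

lemma injOn_insert_prod (h𝒢 : ∀ A ∈ 𝒢, Disjoint T A) :
    (T ×ˢ 𝒢 : Set (α × Finset α)).InjOn fun p => insert p.1 p.2 := by
  rintro ⟨i, A⟩ ⟨hi, hA⟩ ⟨j, B⟩ ⟨-, hB⟩ (hAB : insert i A = insert j B)
  have hiA : i ∉ A := disjoint_left.1 (h𝒢 A hA) hi
  have hiB : i ∉ B := disjoint_left.1 (h𝒢 B hB) hi
  obtain rfl : i = j := (mem_insert.1 (hAB ▸ mem_insert_self i A)).resolve_right hiB
  rw [← erase_insert hiA, hAB, erase_insert hiB]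

lemma card_image₂_insert (h𝒢 : ∀ A ∈ 𝒢, Disjoint T A) : #(image₂ insert T 𝒢) = #T * #𝒢 :=
  card_image₂_iff.2 (injOn_insert_prod h𝒢)

lemma card_image₂_insert_singleton {x : α} (h𝒢 : ∀ A ∈ 𝒢, Disjoint {x} A) :
    #(image₂ insert {x} 𝒢) = #𝒢 := by
  rw [card_image₂_insert h𝒢, card_singleton, one_mul]

lemma filter_mem_image₂_insert {x : α} (hx : x ∈ T) (h𝒢 : ∀ A ∈ 𝒢, Disjoint T A) :
    {A ∈ image₂ insert T 𝒢 | x ∈ A} = image₂ insert {x} 𝒢 := by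
  ext A
  simp only [mem_filter, mem_image₂, mem_singleton, exists_eq_left]
  constructor
  · rintro ⟨⟨i, -, B, hB, rfl⟩, hxA⟩
    obtain rfl : x = i := (mem_insert.1 hxA).resolve_right (disjoint_left.1 (h𝒢 B hB) hx)
    exact ⟨B, hB, rfl⟩
  · rintro ⟨B, hB, rfl⟩
    exact ⟨⟨x, hx, B, hB, rfl⟩, mem_insert_self x B⟩

end InsertFamily

lemma degree_image₂_insert_union {T : Finset ℕ} {𝒢 ℱ : Finset (Finset ℕ)} {x : ℕ} (hx : x ∈ T)
    (h𝒢 : ∀ A ∈ 𝒢, Disjoint T A) (hℱ : ∀ A ∈ ℱ, Disjoint T A) :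
    degree (image₂ insert T 𝒢 ∪ ℱ) x = #𝒢 := by
  have hxℱ : ∀ A ∈ ℱ, x ∉ A := fun A hA => disjoint_left.1 (hℱ A hA) hx
  have hx𝒢 : ∀ A ∈ 𝒢, Disjoint {x} A := fun A hA =>
    (h𝒢 A hA).mono_left (singleton_subset_iff.2 hx)
  rw [degree, filter_union, filter_false_of_mem hxℱ, union_empty, filter_mem_image₂_insert hx h𝒢,
    card_image₂_insert_singleton hx𝒢]

/-- The set `T = {2r−1, …, n}` over which the index `i` ranges in `F₂` and `F₄`. -/
def Tset (n r : ℕ) : Finset ℕ := Icc (2 * r - 1) n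

/-- The family `𝓗` of sets `H` used to build `F₂`: the `(r−2)`-subsets of `S` other than `S₀`. -/
def FamH (r : ℕ) : Finset (Finset ℕ) := ((Sset r).powersetCard (r - 2)).erase (S0set r)

variable {n r : ℕ}

lemma disjoint_one_sset : Disjoint {1} (Sset r) := by
  simp [Sset]

lemma disjoint_one_tset (hr : 2 ≤ r) : Disjoint {1} (Tset n r) := by
  simp only [disjoint_singleton_left, Tset, mem_Icc]
  lia

lemma disjoint_tset_sset : Disjoint (Tset n r) (Sset r) := by
  simp only [disjoint_left, Tset, Sset, mem_Icc]
  lia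

lemma s0set_subset_sset : S0set r ⊆ Sset r :=
  Icc_subset_Icc_right (by lia)

lemma card_sset : #(Sset r) = 2 * r - 3 := by
  rw [Sset, Nat.card_Icc]
  lia

lemma card_s0set : #(S0set r) = r - 2 := by
  rw [S0set, Nat.card_Icc]
  lia

lemma card_famH : #(FamH r) = (2 * r - 3).choose (r - 2) - 1 := by
  have hS₀ : S0set r ∈ (Sset r).powersetCard (r - 2) :=
    mem_powersetCard.2 ⟨s0set_subset_sset, card_s0set⟩
  rw [FamH, card_erase_of_mem hS₀, card_powersetCard, card_sset]

lemma forall_mem_famH_disjoint {U : Finset ℕ} (hU : Disjoint U (Sset r)) :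
    ∀ H ∈ FamH r, Disjoint U H :=
  fun H hH => forall_mem_powersetCard_disjoint hU _ H (mem_of_mem_erase hH)

lemma fam1_eq_image₂ : Fam1 r = image₂ insert {1} ((Sset r).powersetCard (r - 1)) :=
  image₂_singleton_left.symm

lemma fam2_eq_image₂ : Fam2 n r = image₂ insert {1} (image₂ insert (Tset n r) (FamH r)) := by
  rw [image₂_singleton_left, image_image₂, FamH, ← filter_ne']
  rfl

lemma fam4_eq_image₂ : Fam4 n r = image₂ insert (Tset n r) {Sset r \ S0set r} :=
  image₂_singleton_right.symm

lemma forall_mem_sset_sdiff_disjoint {U : Finset ℕ} (hUS : Disjoint U (Sset r)) :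
    ∀ A ∈ ({Sset r \ S0set r} : Finset (Finset ℕ)), Disjoint U A :=
  fun _ hA => mem_singleton.1 hA ▸ hUS.mono_right sdiff_subset

lemma forall_mem_fam1_disjoint {U : Finset ℕ} (hU1 : Disjoint U {1}) (hUS : Disjoint U (Sset r)) :
    ∀ A ∈ Fam1 r, Disjoint U A :=
  fam1_eq_image₂ ▸
    forall_mem_image₂_insert_disjoint hU1 (forall_mem_powersetCard_disjoint hUS (r - 1))

lemma forall_mem_fam3_disjoint {U : Finset ℕ} (hUS : Disjoint U (Sset r)) :
    ∀ A ∈ Fam3 r, Disjoint U A :=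
  forall_mem_powersetCard_disjoint hUS r

lemma forall_mem_fam4_disjoint {U : Finset ℕ} (hUT : Disjoint U (Tset n r))
    (hUS : Disjoint U (Sset r)) : ∀ A ∈ Fam4 n r, Disjoint U A :=
  fam4_eq_image₂ ▸ forall_mem_image₂_insert_disjoint hUT (forall_mem_sset_sdiff_disjoint hUS)

lemma famConstr_eq_image₂_one :
    FamConstr n r =
      image₂ insert {1} ((Sset r).powersetCard (r - 1) ∪ image₂ insert (Tset n r) (FamH r)) ∪
        (Fam3 r ∪ Fam4 n r) := by
  rw [image₂_union_right, ← fam1_eq_image₂, ← fam2_eq_image₂, ← union_assoc, FamConstr]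

lemma famConstr_eq_image₂_tset :
    FamConstr n r =
      image₂ insert (Tset n r) ({Sset r \ S0set r} ∪ image₂ insert {1} (FamH r)) ∪
        (Fam1 r ∪ Fam3 r) := by
  rw [image₂_union_right, image₂_left_comm insert_comm, ← fam2_eq_image₂, ← fam4_eq_image₂,
    FamConstr]
  ac_rfl

lemma degree_famConstr_one (hr : 2 ≤ r) :
    degree (FamConstr n r) 1 =
      (2 * r - 3).choose (r - 1) + ((2 * r - 3).choose (r - 2) - 1) * #(Tset n r) := by
  have hlink : ∀ A ∈ (Sset r).powersetCard (r - 1) ∪ image₂ insert (Tset n r) (FamH r),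
      Disjoint {1} A :=
    forall_mem_union.2 ⟨forall_mem_powersetCard_disjoint disjoint_one_sset (r - 1),
      forall_mem_image₂_insert_disjoint (disjoint_one_tset hr)
        (forall_mem_famH_disjoint disjoint_one_sset)⟩
  have hrest : ∀ A ∈ Fam3 r ∪ Fam4 n r, Disjoint {1} A :=
    forall_mem_union.2 ⟨forall_mem_fam3_disjoint disjoint_one_sset,
      forall_mem_fam4_disjoint (disjoint_one_tset hr) disjoint_one_sset⟩
  have hdisj : Disjoint ((Sset r).powersetCard (r - 1)) (image₂ insert (Tset n r) (FamH r)) :=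
    disjoint_image₂_insert (forall_mem_powersetCard_disjoint disjoint_tset_sset (r - 1))
  rw [famConstr_eq_image₂_one, degree_image₂_insert_union (mem_singleton_self 1) hlink hrest,
    card_union_of_disjoint hdisj, card_powersetCard, card_sset,
    card_image₂_insert (forall_mem_famH_disjoint disjoint_tset_sset), card_famH,
    mul_comm #(Tset n r)]

lemma degree_famConstr_of_mem_tset (hr : 2 ≤ r) {i : ℕ} (hi : i ∈ Tset n r) :
    degree (FamConstr n r) i = (2 * r - 3).choose (r - 2) := by
  have hT1 : Disjoint (Tset n r) {1} := (disjoint_one_tset hr).symm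
  have hlink : ∀ A ∈ {Sset r \ S0set r} ∪ image₂ insert {1} (FamH r), Disjoint (Tset n r) A :=
    forall_mem_union.2 ⟨forall_mem_sset_sdiff_disjoint disjoint_tset_sset,
      forall_mem_image₂_insert_disjoint hT1 (forall_mem_famH_disjoint disjoint_tset_sset)⟩
  have hrest : ∀ A ∈ Fam1 r ∪ Fam3 r, Disjoint (Tset n r) A :=
    forall_mem_union.2 ⟨forall_mem_fam1_disjoint hT1 disjoint_tset_sset,
      forall_mem_fam3_disjoint disjoint_tset_sset⟩
  have hdisj : Disjoint {Sset r \ S0set r} (image₂ insert {1} (FamH r)) :=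
    disjoint_image₂_insert (forall_mem_sset_sdiff_disjoint disjoint_one_sset)
  have hpos : 0 < (2 * r - 3).choose (r - 2) := Nat.choose_pos (by lia)
  rw [famConstr_eq_image₂_tset, degree_image₂_insert_union hi hlink hrest,
    card_union_of_disjoint hdisj, card_singleton,
    card_image₂_insert_singleton (forall_mem_famH_disjoint disjoint_one_sset), card_famH,
    Nat.add_sub_cancel' hpos]

end

theorem famConstr_degrees_general (n r : ℕ) (hr : 2 ≤ r) :
    degree (FamConstr n r) 1 =
      Nat.choose (2 * r - 3) (r - 1) +
        (Nat.choose (2 * r - 3) (r - 2) - 1) * (Tset n r).card ∧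
    ∀ i ∈ Tset n r, degree (FamConstr n r) i = Nat.choose (2 * r - 3) (r - 2) :=
  ⟨degree_famConstr_one hr, fun _ => degree_famConstr_of_mem_tset hr⟩

/-- In `F = F₁ ∪ F₂ ∪ F₃ ∪ F₄` the degree of `1` is
`C(2r−3, r−1) + (C(2r−3, r−2) − 1)(n − 2r + 2)` and the degree of each `i` with
`2r−1 ≤ i ≤ n` is `C(2r−3, r−2)`. -/
theorem famConstr_degrees (n r : ℕ) (hr : 3 ≤ r) (hn : 2 * r + 2 < n) :
    degree (FamConstr n r) 1 =
      Nat.choose (2 * r - 3) (r - 1) +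
        (Nat.choose (2 * r - 3) (r - 2) - 1) * (n - 2 * r + 2) ∧
    ∀ i : ℕ, 2 * r - 1 ≤ i → i ≤ n →
      degree (FamConstr n r) i = Nat.choose (2 * r - 3) (r - 2) := by
  have hT : (Tset n r).card = n - 2 * r + 2 := by rw [Tset, Nat.card_Icc]; lia
  obtain ⟨h1, hi⟩ := famConstr_degrees_general n r (by lia)
  exact ⟨hT ▸ h1, fun i hri hin => hi i (Finset.mem_Icc.2 ⟨hri, hin⟩)⟩
end

section
/- Let n, r be positive integers with r ≤ n and let F be a nonempty intersecting family of r-element subsets of [n] with ∪F = [n]. Then r² · Δ(F) ≥ n · δ(F); that is, the ratio of the maximum degree to the minimum degree of F is at least n/r². (Maximality of F is not needed.) -/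
section

variable {α : Type*} [DecidableEq α] {V T : Finset α} {F : Finset (Finset α)} {r d D : ℕ}

lemma card_mul_le_card_mul_of_le_card_filter_mem
    (hsize : ∀ A ∈ F, A.card ≤ r) (hdeg : ∀ x ∈ V, d ≤ (F.filter (x ∈ ·)).card) :
    V.card * d ≤ F.card * r :=
  calc
    V.card * d ≤ ∑ A ∈ F, (V ∩ A).card := Finset.le_sum_card_inter hdeg
    _ ≤ F.card * r := Finset.sum_le_card_nsmul F _ r fun A hA =>
      (Finset.card_le_card Finset.inter_subset_right).trans (hsize A hA)

lemma card_le_card_mul_of_inter_nonempty (hT : ∀ A ∈ F, (T ∩ A).Nonempty)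
    (hdeg : ∀ x ∈ T, (F.filter (x ∈ ·)).card ≤ D) :
    F.card ≤ T.card * D :=
  calc
    F.card = ∑ _A ∈ F, 1 := Finset.card_eq_sum_ones F
    _ ≤ ∑ A ∈ F, (T ∩ A).card := Finset.sum_le_sum fun A hA => (hT A hA).card_pos
    _ ≤ T.card * D := Finset.sum_card_inter_le hdeg

theorem ratio_lower_bound_general (hsize : ∀ A ∈ F, A.card ≤ r)
    (hT : ∀ A ∈ F, (T ∩ A).Nonempty) (hmin : ∀ x ∈ V, d ≤ (F.filter (x ∈ ·)).card)
    (hmax : ∀ x ∈ T, (F.filter (x ∈ ·)).card ≤ D) :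
    V.card * d ≤ r * T.card * D :=
  calc
    V.card * d ≤ F.card * r := card_mul_le_card_mul_of_le_card_filter_mem hsize hmin
    _ ≤ T.card * D * r := Nat.mul_le_mul_right r (card_le_card_mul_of_inter_nonempty hT hmax)
    _ = r * T.card * D := by ring

end

lemma minDeg_le_degree {n x : ℕ} (F : Finset (Finset ℕ)) (hx : x ∈ Finset.Icc 1 n) :
    minDeg n F ≤ degree F x :=
  Nat.sInf_le ⟨x, Finset.mem_Icc.1 hx, rfl⟩

lemma degree_le_maxDeg {n x : ℕ} (F : Finset (Finset ℕ)) (hx : x ∈ Finset.Icc 1 n) :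
    degree F x ≤ maxDeg n F :=
  le_csSup ((Set.finite_Icc 1 n).image _).bddAbove ⟨x, Finset.mem_Icc.1 hx, rfl⟩

/-- For a nonempty intersecting family `F` of `r`-subsets of `[n]` with
`∪F = [n]` we have `r²·Δ(F) ≥ n·δ(F)`. Maximality is not needed. -/
theorem ratio_lower_bound (n r : ℕ) (hr : 1 ≤ r) (hrn : r ≤ n)
    (F : Finset (Finset ℕ)) (hne : F.Nonempty) (hfam : IsFamily n r F)
    (hint : IsIntersecting F) (hcov : Covers n F) :
    n * minDeg n F ≤ r ^ 2 * maxDeg n F := by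
  obtain ⟨A, hA⟩ := hne
  simpa [(hfam A hA).2, sq] using ratio_lower_bound_general (fun B hB => (hfam B hB).2.le)
    (hint A hA) (fun _ => minDeg_le_degree F) fun _ hx => degree_le_maxDeg F ((hfam A hA).1 hx)
end
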